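/- arXiv:1502.06507 — 6 statements merged into one kernel-verified Lean document; each statement's English description precedes it below -/
import Mathlib

section
/- For every real z with -1 < z < 1, the function G(z) = (z+1)·(12·Li₃((1+z)/2) − 6·ln((1+z)/2)·Li₂((1+z)/2) − π²·ln((1+z)/2) − 12·ζ(3)) has derivative G′(z) = 12·Li₃((1+z)/2) − 6·ln((1+z)/2)·Li₂((1+z)/2) − π²·ln((1+z)/2) − 12·ζ(3) − 6·Li₂((1−z)/2). -/
open Real

/-- The polylogarithm `Li s x = ∑_{k=1}^∞ x^k / k^s` for real `x` with `|x| < 1`. -/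
noncomputable def Li (s : ℕ) (x : ℝ) : ℝ := ∑' k : ℕ, x ^ (k + 1) / ((k : ℝ) + 1) ^ s

/-- `ζ(3) = ∑_{k=1}^∞ 1/k³`. -/
noncomputable def zeta3 : ℝ := ∑' k : ℕ, 1 / ((k : ℝ) + 1) ^ 3

/-- Termwise differentiation of the polylogarithm series: `Li (s + 1)' = Li s / x`. -/
theorem hasDerivAt_Li_succ (s : ℕ) {x : ℝ} (hx : |x| < 1) (hx0 : x ≠ 0) :
    HasDerivAt (Li (s + 1)) (Li s x / x) x := by
  obtain ⟨r, hxr, hr⟩ := exists_between hx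
  have hr0 : 0 ≤ r := (abs_nonneg x).trans hxr.le
  have hmain : HasDerivAt (fun y => ∑' k : ℕ, y ^ (k + 1) / ((k : ℝ) + 1) ^ (s + 1))
      (∑' k : ℕ, x ^ k / ((k : ℝ) + 1) ^ s) x := by
    refine hasDerivAt_tsum_of_isPreconnected (u := fun k : ℕ => r ^ k)
      (t := Set.Ioo (-r) r) (y₀ := 0)
      (summable_geometric_of_lt_one hr0 hr) isOpen_Ioo isPreconnected_Ioo
      (g := fun k y => y ^ (k + 1) / ((k : ℝ) + 1) ^ (s + 1))
      (g' := fun k y => y ^ k / ((k : ℝ) + 1) ^ s) ?_ ?_ ?_ ?_ (abs_lt.mp hxr)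
    · intro k y _
      have hk : (k : ℝ) + 1 ≠ 0 := by positivity
      refine ((hasDerivAt_pow (k + 1) y).div_const (((k : ℝ) + 1) ^ (s + 1))).congr_deriv ?_
      push_cast
      field_simp
      ring
    · intro k y hy
      have hy' : |y| ≤ r := (abs_lt.mpr hy).le
      have hk : (1 : ℝ) ≤ ((k : ℝ) + 1) ^ s := one_le_pow₀ (by linarith [k.cast_nonneg (α := ℝ)])
      rw [Real.norm_eq_abs, abs_div, abs_pow, abs_of_pos (by positivity : 0 < ((k : ℝ) + 1) ^ s)]
      exact (div_le_self (by positivity) hk).trans (pow_le_pow_left₀ (abs_nonneg y) hy' k)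
    · have := (abs_nonneg x).trans_lt hxr
      constructor <;> linarith
    · simp
  refine HasDerivAt.congr_deriv hmain ?_
  rw [Li, ← tsum_div_const]
  refine tsum_congr fun k => ?_
  rw [pow_succ]
  field_simp

theorem Li_one {x : ℝ} (hx : |x| < 1) : Li 1 x = -Real.log (1 - x) := by
  simpa [Li] using (Real.hasSum_pow_div_log_of_abs_lt_one hx).tsum_eq

theorem hasDerivAt_Li_two {x : ℝ} (hx0 : 0 < x) (hx1 : x < 1) :
    HasDerivAt (Li 2) (-Real.log (1 - x) / x) x := by
  have hx : |x| < 1 := abs_lt.mpr ⟨by linarith, hx1⟩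
  simpa only [Li_one hx] using hasDerivAt_Li_succ 1 hx hx0.ne'

theorem Li_two_one : Li 2 1 = π ^ 2 / 6 := by
  have h := (hasSum_nat_add_iff' 1).mpr hasSum_zeta_two
  simpa [Li] using h.tsum_eq

theorem continuousOn_Li_two : ContinuousOn (Li 2) (Set.Icc (-1) 1) := by
  have hsum : Summable fun k : ℕ => 1 / ((k : ℝ) + 1) ^ 2 := by
    simpa using (summable_nat_add_iff 1).mpr hasSum_zeta_two.summable
  refine continuousOn_tsum (fun k => by fun_prop) hsum fun k x hx => ?_
  rw [Real.norm_eq_abs, abs_div, abs_pow, abs_of_pos (by positivity : 0 < ((k : ℝ) + 1) ^ 2)]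
  gcongr
  exact pow_le_one₀ (abs_nonneg x) (abs_le.mpr hx)

open Filter Topology in
theorem tendsto_log_mul_log_one_sub :
    Tendsto (fun x : ℝ => Real.log x * Real.log (1 - x)) (𝓝[>] 0) (𝓝 0) := by
  have hslope : Tendsto (fun x : ℝ => x⁻¹ * Real.log (1 - x)) (𝓝[>] 0) (𝓝 (-1)) := by
    have hd : HasDerivAt (fun x : ℝ => Real.log (1 - x)) (-1) 0 := by
      simpa using ((hasDerivAt_id (0 : ℝ)).const_sub 1).log (by simp)
    simpa using hd.tendsto_slope_zero_right
  have hlog : Tendsto (fun x : ℝ => x * Real.log x) (𝓝[>] 0) (𝓝 0) := by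
    simpa using (Real.continuous_mul_log.tendsto 0).mono_left nhdsWithin_le_nhds
  have := hlog.mul hslope
  rw [zero_mul] at this
  refine this.congr' ?_
  filter_upwards [self_mem_nhdsWithin] with x hx
  have hx' : x ≠ 0 := (Set.mem_Ioi.mp hx).ne'
  field_simp

open Filter Topology in
/-- Euler's reflection formula for the dilogarithm. -/
theorem Li_two_add_Li_two_one_sub {x : ℝ} (hx0 : 0 < x) (hx1 : x < 1) :
    Li 2 x + Li 2 (1 - x) = π ^ 2 / 6 - Real.log x * Real.log (1 - x) := by
  set f : ℝ → ℝ := fun y => Li 2 y + Li 2 (1 - y) + Real.log y * Real.log (1 - y) with hf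
  have hderiv : ∀ y ∈ Set.Ioo (0 : ℝ) 1, HasDerivAt f 0 y := by
    rintro y ⟨hy0, hy1⟩
    have hy1' : 0 < 1 - y := by linarith
    have hsub : HasDerivAt (fun y : ℝ => 1 - y) (-1) y := (hasDerivAt_id y).const_sub 1
    have h2 : HasDerivAt (fun y => Li 2 (1 - y)) _ y :=
      (hasDerivAt_Li_two hy1' (by linarith)).comp y hsub
    refine (((hasDerivAt_Li_two hy0 hy1).add h2).add
      ((Real.hasDerivAt_log hy0.ne').mul (hsub.log hy1'.ne'))).congr_deriv ?_
    rw [sub_sub_cancel]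
    field_simp
    ring
  have hconst : ∀ y ∈ Set.Ioo (0 : ℝ) 1, f y = f x := fun y hy =>
    isOpen_Ioo.is_const_of_deriv_eq_zero isPreconnected_Ioo
      (fun y hy => (hderiv y hy).differentiableAt.differentiableWithinAt)
      (fun y hy => (hderiv y hy).deriv) hy ⟨hx0, hx1⟩
  have hmem : ∀ᶠ y in 𝓝[>] (0 : ℝ), y ∈ Set.Ioo (0 : ℝ) 1 :=
    Ioo_mem_nhdsGT one_pos
  have hleft : Tendsto (Li 2) (𝓝[>] 0) (𝓝 0) := by
    have h := (continuousOn_Li_two.continuousAt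
      (Icc_mem_nhds (by norm_num : (-1 : ℝ) < 0) one_pos)).tendsto
    have h0 : Li 2 0 = 0 := by simp [Li]
    rw [h0] at h
    exact h.mono_left nhdsWithin_le_nhds
  have hright : Tendsto (fun y => Li 2 (1 - y)) (𝓝[>] 0) (𝓝 (π ^ 2 / 6)) := by
    rw [← Li_two_one]
    refine (continuousOn_Li_two 1 (by norm_num)).tendsto.comp
      (tendsto_nhdsWithin_iff.mpr ⟨?_, ?_⟩)
    · have : Continuous fun y : ℝ => 1 - y := by fun_prop
      simpa using (this.tendsto 0).mono_left nhdsWithin_le_nhds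
    · filter_upwards [hmem] with y hy
      exact ⟨by linarith [hy.2], by linarith [hy.1]⟩
  have hlim : Tendsto f (𝓝[>] 0) (𝓝 (0 + π ^ 2 / 6 + 0)) :=
    (hleft.add hright).add tendsto_log_mul_log_one_sub
  have hlim' : Tendsto f (𝓝[>] 0) (𝓝 (f x)) :=
    tendsto_const_nhds.congr' (hmem.mono fun y hy => (hconst y hy).symm)
  have := tendsto_nhds_unique hlim hlim'
  simp only [hf] at this
  linarith

theorem stmt_0 (z : ℝ) (h1 : -1 < z) (h2 : z < 1) :
    HasDerivAt (fun z : ℝ => (z + 1) *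
      (12 * Li 3 ((1 + z) / 2) - 6 * Real.log ((1 + z) / 2) * Li 2 ((1 + z) / 2)
        - π ^ 2 * Real.log ((1 + z) / 2) - 12 * zeta3))
      (12 * Li 3 ((1 + z) / 2) - 6 * Real.log ((1 + z) / 2) * Li 2 ((1 + z) / 2)
        - π ^ 2 * Real.log ((1 + z) / 2) - 12 * zeta3 - 6 * Li 2 ((1 - z) / 2)) z := by
  obtain ⟨x, hx⟩ : ∃ x, x = (1 + z) / 2 := ⟨_, rfl⟩
  have hx0 : 0 < x := by linarith
  have hx1 : x < 1 := by linarith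
  have hrefl := Li_two_add_Li_two_one_sub hx0 hx1
  have hz : (1 - z) / 2 = 1 - x := by linarith
  have hz1 : z + 1 = 2 * x := by linarith
  have hin : HasDerivAt (fun z : ℝ => (1 + z) / 2) (1 / 2) z :=
    ((hasDerivAt_id z).const_add 1).div_const 2
  have hLi3 : HasDerivAt (fun z : ℝ => Li 3 ((1 + z) / 2)) (Li 2 x / x * (1 / 2)) z := by
    have h := hasDerivAt_Li_succ 2 (abs_lt.mpr ⟨by linarith, hx1⟩) hx0.ne'
    rw [hx] at h ⊢
    exact h.comp z hin
  have hLi2 : HasDerivAt (fun z : ℝ => Li 2 ((1 + z) / 2))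
      (-Real.log (1 - x) / x * (1 / 2)) z := by
    have h := hasDerivAt_Li_two hx0 hx1
    rw [hx] at h ⊢
    exact h.comp z hin
  have hlog : HasDerivAt (fun z : ℝ => Real.log ((1 + z) / 2)) (1 / 2 / x) z := by
    rw [hx]
    exact hin.log (by rw [← hx]; exact hx0.ne')
  refine (((hasDerivAt_id z).add_const 1).mul
    ((((hLi3.const_mul 12).sub ((hlog.const_mul 6).mul hLi2)).sub
      (hlog.const_mul (π ^ 2))).sub_const (12 * zeta3))).congr_deriv ?_
  simp only [id, Pi.sub_apply, Pi.mul_apply, hz, ← hx, hz1]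
  rw [eq_sub_of_add_eq' hrefl]
  field_simp
  ring
end

section
/- For every real t with 0 < t < 1/2, the limit as t → 0⁺ of the function 𝔍(t) = (ln²(t) − ln(t)·ln(1−t))·Li₂(t) − ln²(1−t)·Li₂(1−t) + ln²(t/(1−t))·Li₂(t/(t−1)) − (1/2)·Li₂(t)² + 2·ln(t)·Li₃(t) + 2·ln(1−t)·Li₃(1−t) − 2·ln(t/(1−t))·Li₃(t/(t−1)) + 2·(Li₄(t) − Li₄(1−t) + Li₄(t/(t−1))) + ln²(1−t)·((1/2)·ln²(t) − ln(t)·ln(1−t) + (1/4)·ln²(1−t)) exists and equals −π⁴/45; that is, 𝔍(t) tends to −π⁴/45 as t tends to 0 from the right. (Here Li₂(1−t) and Li₃(1−t) and Li₄(1−t) are interpreted for 1−t < 1 by the power series, whose values tend to π²/6, ζ(3), and π⁴/90 respectively as t → 0⁺.) -/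
open Real

open Filter Topology

lemma summable_one_div_add_one_pow {s : ℕ} (hs : 2 ≤ s) :
    Summable fun k : ℕ => 1 / ((k : ℝ) + 1) ^ s := by
  have h := (summable_nat_add_iff 1).2 (Real.summable_one_div_nat_pow.2 hs)
  simpa using h

lemma norm_Li_term_le (s k : ℕ) {x : ℝ} (hx : |x| ≤ 1) :
    ‖x ^ (k + 1) / ((k : ℝ) + 1) ^ s‖ ≤ |x| * (1 / ((k : ℝ) + 1) ^ s) := by
  have hk : (0 : ℝ) < ((k : ℝ) + 1) ^ s := by positivity
  rw [norm_div, norm_pow, Real.norm_eq_abs, Real.norm_of_nonneg hk.le, mul_one_div]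
  gcongr
  rw [pow_succ]
  exact mul_le_of_le_one_left (abs_nonneg x) (pow_le_one₀ (abs_nonneg x) hx)

lemma abs_Li_le {s : ℕ} (hs : 2 ≤ s) {x : ℝ} (hx : |x| ≤ 1) :
    |Li s x| ≤ |x| * ∑' k : ℕ, 1 / ((k : ℝ) + 1) ^ s := by
  have hsum := (summable_one_div_add_one_pow hs).mul_left |x|
  rw [← tsum_mul_left]
  exact tsum_of_norm_bounded hsum.hasSum fun k => norm_Li_term_le s k hx

lemma continuousOn_Li {s : ℕ} (hs : 2 ≤ s) : ContinuousOn (Li s) (Set.Icc (-1) 1) := by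
  refine continuousOn_tsum (fun k => by fun_prop) (summable_one_div_add_one_pow hs)
    fun k x hx => ?_
  have hx' : |x| ≤ 1 := abs_le.2 hx
  exact (norm_Li_term_le s k hx').trans (mul_le_of_le_one_left (by positivity) hx')

lemma Li_four_one : Li 4 1 = π ^ 4 / 90 := by
  have h := (hasSum_nat_add_iff' 1).2 hasSum_zeta_four
  simpa [Li] using h.tsum_eq

lemma tendsto_Li_one_sub {s : ℕ} (hs : 2 ≤ s) :
    Tendsto (fun t : ℝ => Li s (1 - t)) (𝓝[Set.Ioo 0 (1 / 2)] 0) (𝓝 (Li s 1)) := by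
  refine (continuousOn_Li hs 1 (by simp)).tendsto.comp (tendsto_nhdsWithin_iff.2 ⟨?_, ?_⟩)
  · have h : Tendsto (fun t : ℝ => 1 - t) (𝓝 0) (𝓝 (1 - 0)) := by
      apply Continuous.tendsto
      fun_prop
    rw [sub_zero] at h
    exact h.mono_left nhdsWithin_le_nhds
  · filter_upwards [self_mem_nhdsWithin] with t ht
    constructor <;> linarith [ht.1, ht.2]

lemma tendsto_log_pow_mul_of_abs_le {g : ℝ → ℝ} {C : ℝ} (n : ℕ)
    (hg : ∀ t ∈ Set.Ioo (0 : ℝ) (1 / 2), |g t| ≤ C * t) :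
    Tendsto (fun t => Real.log t ^ n * g t) (𝓝[Set.Ioo 0 (1 / 2)] 0) (𝓝 0) := by
  have hlog : Tendsto (fun t : ℝ => |Real.log t ^ n * t|) (𝓝[>] 0) (𝓝 0) := by
    have h := (tendsto_log_mul_rpow_nhdsGT_zero
      (r := 1 / ((n : ℝ) + 1)) (by positivity)).pow n
    have hr : Tendsto (fun t : ℝ => t ^ (1 / ((n : ℝ) + 1))) (𝓝[>] 0) (𝓝 0) := by
      have hc := (Real.continuous_rpow_const
        (q := 1 / ((n : ℝ) + 1)) (by positivity)).tendsto 0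
      rw [Real.zero_rpow (by positivity)] at hc
      exact hc.mono_left nhdsWithin_le_nhds
    have h' := (h.mul hr).abs
    rw [mul_zero, abs_zero] at h'
    refine h'.congr' ?_
    filter_upwards [self_mem_nhdsWithin] with t (ht : 0 < t)
    rw [mul_pow, mul_assoc, ← pow_succ, ← Real.rpow_natCast (t ^ _), ← Real.rpow_mul ht.le]
    push_cast
    rw [one_div_mul_cancel (by positivity), Real.rpow_one]
  have hlog' := (hlog.mono_left
    (nhdsWithin_mono 0 (Set.Ioo_subset_Ioi_self (a := 1 / 2)))).const_mul C
  rw [mul_zero] at hlog'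
  refine squeeze_zero_norm' ?_ hlog'
  filter_upwards [self_mem_nhdsWithin] with t ht
  rw [Real.norm_eq_abs, abs_mul, abs_mul, abs_of_pos ht.1]
  calc |Real.log t ^ n| * |g t| ≤ |Real.log t ^ n| * (C * t) := by gcongr; exact hg t ht
    _ = C * (|Real.log t ^ n| * t) := by ring

lemma tendsto_log_pow_mul_Li {s : ℕ} (hs : 2 ≤ s) (n : ℕ) :
    Tendsto (fun t => Real.log t ^ n * Li s t) (𝓝[Set.Ioo 0 (1 / 2)] 0) (𝓝 0) := by
  refine tendsto_log_pow_mul_of_abs_le (C := ∑' k : ℕ, 1 / ((k : ℝ) + 1) ^ s) n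
    fun t ht => ?_
  have hle : |t| ≤ 1 := by rw [abs_of_pos ht.1]; linarith [ht.2]
  have h := abs_Li_le hs hle
  rwa [abs_of_pos ht.1, mul_comm] at h

lemma tendsto_log_pow_mul_Li_div_sub_one {s : ℕ} (hs : 2 ≤ s) (n : ℕ) :
    Tendsto (fun t => Real.log t ^ n * Li s (t / (t - 1))) (𝓝[Set.Ioo 0 (1 / 2)] 0)
      (𝓝 0) := by
  refine tendsto_log_pow_mul_of_abs_le (C := 2 * ∑' k : ℕ, 1 / ((k : ℝ) + 1) ^ s) n
    fun t ht => ?_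
  have hpos : 0 < 1 - t := by linarith [ht.2]
  have hle : |t / (t - 1)| ≤ 2 * t := by
    rw [abs_div, abs_of_pos ht.1, abs_sub_comm, abs_of_pos hpos, div_le_iff₀ hpos]
    nlinarith [ht.1, ht.2]
  have hZ : 0 ≤ ∑' k : ℕ, 1 / ((k : ℝ) + 1) ^ s := tsum_nonneg fun k => by positivity
  calc |Li s (t / (t - 1))| ≤ |t / (t - 1)| * ∑' k : ℕ, 1 / ((k : ℝ) + 1) ^ s :=
        abs_Li_le hs (by linarith [ht.2])
    _ ≤ 2 * t * ∑' k : ℕ, 1 / ((k : ℝ) + 1) ^ s := by gcongr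
    _ = _ := by ring

lemma tendsto_log_pow_mul_log_one_sub (n : ℕ) :
    Tendsto (fun t => Real.log t ^ n * Real.log (1 - t)) (𝓝[Set.Ioo 0 (1 / 2)] 0)
      (𝓝 0) := by
  refine tendsto_log_pow_mul_of_abs_le (C := 2) n fun t ht => ?_
  have hpos : 0 < 1 - t := by linarith [ht.2]
  have hlow := Real.one_sub_inv_le_log_of_pos hpos
  have hup := Real.log_le_sub_one_of_pos hpos
  have hinv : (1 - t)⁻¹ ≤ 1 + 2 * t := by
    rw [inv_le_iff_one_le_mul₀ hpos]
    nlinarith [ht.1, ht.2]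
  rw [abs_le]
  constructor <;> linarith [ht.1]

theorem stmt_3 :
    Filter.Tendsto (fun t : ℝ =>
      (Real.log t ^ 2 - Real.log t * Real.log (1 - t)) * Li 2 t
        - Real.log (1 - t) ^ 2 * Li 2 (1 - t)
        + Real.log (t / (1 - t)) ^ 2 * Li 2 (t / (t - 1))
        - (1 / 2) * (Li 2 t) ^ 2
        + 2 * Real.log t * Li 3 t
        + 2 * Real.log (1 - t) * Li 3 (1 - t)
        - 2 * Real.log (t / (1 - t)) * Li 3 (t / (t - 1))
        + 2 * (Li 4 t - Li 4 (1 - t) + Li 4 (t / (t - 1)))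
        + Real.log (1 - t) ^ 2 * ((1 / 2) * Real.log t ^ 2
            - Real.log t * Real.log (1 - t) + (1 / 4) * Real.log (1 - t) ^ 2))
      (nhdsWithin 0 (Set.Ioo 0 (1 / 2))) (nhds (-π ^ 4 / 45)) := by
  have hM := tendsto_log_pow_mul_log_one_sub 0
  have hLM := tendsto_log_pow_mul_log_one_sub 1
  have a (n : ℕ) := tendsto_log_pow_mul_Li (le_refl 2) n
  have b (n : ℕ) := tendsto_log_pow_mul_Li_div_sub_one (le_refl 2) n
  have c := tendsto_log_pow_mul_Li (s := 3) (by norm_num) 1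
  have d (n : ℕ) := tendsto_log_pow_mul_Li_div_sub_one (s := 3) (by norm_num) n
  have e := tendsto_log_pow_mul_Li (s := 4) (by norm_num) 0
  have f := tendsto_log_pow_mul_Li_div_sub_one (s := 4) (by norm_num) 0
  have u2 := tendsto_Li_one_sub (le_refl 2)
  have u3 := tendsto_Li_one_sub (s := 3) (by norm_num)
  have u4 := tendsto_Li_one_sub (s := 4) (by norm_num)
  have key := ((a 2).sub (hM.mul (a 1))).sub ((hM.pow 2).mul u2)
    |>.add (((b 2).sub ((hM.mul (b 1)).const_mul 2)).add ((hM.pow 2).mul (b 0)))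
    |>.sub (((a 0).pow 2).const_mul (1 / 2))
    |>.add (c.const_mul 2)
    |>.add ((hM.mul u3).const_mul 2)
    |>.sub (((d 1).sub (hM.mul (d 0))).const_mul 2)
    |>.add (((e.sub u4).add f).const_mul 2)
    |>.add ((((hLM.pow 2).const_mul (1 / 2)).sub (hLM.mul (hM.pow 2))).add
      ((hM.pow 4).const_mul (1 / 4)))
  rw [Li_four_one] at key
  convert key.congr' ?_ using 2
  · ring
  · filter_upwards [self_mem_nhdsWithin] with t ht
    have hpos : 0 < 1 - t := by linarith [ht.2]
    rw [Real.log_div ht.1.ne' hpos.ne']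
    ring
end

section
/- Define, for real z with −1 < z < 0 and t = (1+z)/2, the function F(z) = π⁴/15 + 24·[ (1/2)·Li₂(t)² − (π²/6)·Li₂(t) + 2·Li₄(t) − 2·Li₄(1−t) + 2·ln(t)·(Li₃(1−t) − ζ(3)) + (1/12)·ln⁴(1−t) + (π²/6)·ln²(1−t) + 2·Li₄(t/(t−1)) + ln(t)·ln(1−t)·( Li₂(t) − π²/2 − (1/3)·ln²(1−t) + ln(t)·ln(1−t) ) ]. Then for every such z, d/dz[ (1−z²)·F′(z) ] = −4·P₃(z) − 12·P₂(z), where P₂(z) = −2·Li₂((1−z)/2) and P₃(z) = 12·Li₃((1+z)/2) − 6·ln((1+z)/2)·Li₂((1+z)/2) − π²·ln((1+z)/2) − 12·ζ(3). -/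
open Real

/-- The closed-form expression for `𝖯₄(z)`, with `t = (1+z)/2`. -/
noncomputable def F (z : ℝ) : ℝ :=
  let t := (1 + z) / 2
  π ^ 4 / 15 + 24 * ((1 / 2) * (Li 2 t) ^ 2 - (π ^ 2 / 6) * Li 2 t
    + 2 * Li 4 t - 2 * Li 4 (1 - t)
    + 2 * Real.log t * (Li 3 (1 - t) - zeta3)
    + (1 / 12) * Real.log (1 - t) ^ 4 + (π ^ 2 / 6) * Real.log (1 - t) ^ 2
    + 2 * Li 4 (t / (t - 1))
    + Real.log t * Real.log (1 - t) * (Li 2 t - π ^ 2 / 2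
        - (1 / 3) * Real.log (1 - t) ^ 2 + Real.log t * Real.log (1 - t)))

theorem HasDerivAt.Li_succ (s : ℕ) {f : ℝ → ℝ} {f' x : ℝ} (hf : HasDerivAt f f' x)
    (hx : |f x| < 1) (hx0 : f x ≠ 0) :
    HasDerivAt (fun y => Li (s + 1) (f y)) (Li s (f x) / f x * f') x :=
  (hasDerivAt_Li_succ s hx hx0).comp x hf

theorem Li_zero_right (s : ℕ) : Li s 0 = 0 := by
  simp [Li]

theorem eq_of_hasDerivAt_zero {f : ℝ → ℝ} {a b : ℝ} (hab : a < b)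
    (hf : ContinuousOn f (Set.Icc a b)) (hf' : ∀ x ∈ Set.Ioo a b, HasDerivAt f 0 x) :
    f b = f a := by
  obtain ⟨c, _, hc⟩ := exists_hasDerivAt_eq_slope f (fun _ => 0) hab hf hf'
  have := (div_eq_zero_iff.1 hc.symm).resolve_right (sub_pos.2 hab).ne'
  linarith

theorem abs_div_sub_one_lt_one {t : ℝ} (h0 : 0 ≤ t) (h1 : t < 1 / 2) : |t / (t - 1)| < 1 := by
  rw [abs_div, abs_of_nonneg h0, abs_of_neg (by linarith), div_lt_one (by linarith)]
  linarith

theorem hasDerivAt_div_sub_one {t : ℝ} (ht : t - 1 ≠ 0) :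
    HasDerivAt (fun y : ℝ => y / (y - 1)) (-1 / (t - 1) ^ 2) t := by
  refine ((hasDerivAt_id t).div ((hasDerivAt_id t).sub_const 1) ht).congr_deriv ?_
  simp only [id]
  ring

/-- The Landen identity for the dilogarithm. -/
theorem Li_two_landen {t : ℝ} (h0 : 0 < t) (h1 : t < 1 / 2) :
    Li 2 (t / (t - 1)) = -Li 2 t - Real.log (1 - t) ^ 2 / 2 := by
  have key := eq_of_hasDerivAt_zero
    (f := fun x => Li 2 (x / (x - 1)) + Li 2 x + Real.log (1 - x) ^ 2 / 2) h0 ?_ ?_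
  · simp only [zero_div, Li_zero_right, sub_zero, Real.log_one] at key
    linarith
  · refine ((continuousOn_Li_two.comp ?_ ?_).add (continuousOn_Li_two.mono ?_)).add ?_
    · exact continuousOn_id.div (by fun_prop) fun x hx => by
        have := hx.2
        exact (by linarith : x - 1 < 0).ne
    · exact fun x hx => abs_le.1 (abs_div_sub_one_lt_one hx.1 (hx.2.trans_lt h1)).le
    · exact fun x hx => ⟨by linarith [hx.1], by linarith [hx.2]⟩
    · refine ((ContinuousOn.log (by fun_prop) fun x hx => ?_).pow 2).div_const 2
      have := hx.2
      exact (by linarith : 0 < 1 - x).ne'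
  · rintro x ⟨hx0, hxt⟩
    have hx1 : x < 1 / 2 := hxt.trans h1
    have hx2 : x - 1 ≠ 0 := by linarith
    have hx3 : 1 - x ≠ 0 := by linarith
    have hu := abs_div_sub_one_lt_one hx0.le hx1
    have hxabs : |x| < 1 := by rw [abs_of_pos hx0]; linarith
    have hlog : HasDerivAt (fun y : ℝ => Real.log (1 - y)) _ x :=
      ((hasDerivAt_id x).const_sub 1).log hx3
    refine ((((hasDerivAt_div_sub_one hx2).Li_succ 1 hu (div_ne_zero hx0.ne' hx2)).add
      (hasDerivAt_Li_succ 1 hxabs hx0.ne')).add ((hlog.pow 2).div_const 2)).congr_deriv ?_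
    have hone : 1 - x / (x - 1) = (1 - x)⁻¹ := by
      rw [eq_comm, inv_eq_iff_eq_inv]
      field_simp
      ring
    rw [Li_one hu, Li_one hxabs, hone, Real.log_inv]
    simp only [id]
    field_simp
    ring

theorem continuousOn_log_mul_log_one_sub :
    ContinuousOn (fun x : ℝ => Real.log x * Real.log (1 - x)) (Set.Iio 1) := by
  have hlog : ∀ x : ℝ, x < 1 → DifferentiableAt ℝ (fun y : ℝ => Real.log (1 - y)) x :=
    fun x hx => DifferentiableAt.log (by fun_prop) (by linarith)
  intro x hx
  refine ContinuousAt.continuousWithinAt ?_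
  have heq : (fun x : ℝ => Real.log x * Real.log (1 - x)) =
      fun x => (x * Real.log x) * dslope (fun y : ℝ => Real.log (1 - y)) 0 x := by
    funext y
    have := sub_smul_dslope (fun y : ℝ => Real.log (1 - y)) 0 y
    simp only [sub_zero, smul_eq_mul, Real.log_one] at this
    rw [← this]
    ring
  rcases eq_or_ne x 0 with rfl | hx0
  · rw [heq]
    exact Real.continuous_mul_log.continuousAt.mul (continuousAt_dslope_same.2 (hlog 0 hx))
  · exact (Real.continuousAt_log hx0).mul (hlog x hx).continuousAt

/-- The Euler reflection identity for the dilogarithm. -/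
theorem Li_two_reflection {t : ℝ} (h0 : 0 < t) (h1 : t < 1) :
    Li 2 (1 - t) = π ^ 2 / 6 - Real.log t * Real.log (1 - t) - Li 2 t := by
  have key := eq_of_hasDerivAt_zero
    (f := fun x => Li 2 x + Li 2 (1 - x) + Real.log x * Real.log (1 - x)) h0 ?_ ?_
  · simp only [Li_zero_right, sub_zero, Real.log_one, Li_two_one, mul_zero] at key
    linarith
  · refine ((continuousOn_Li_two.mono ?_).add (continuousOn_Li_two.comp (by fun_prop) ?_)).add
      (continuousOn_log_mul_log_one_sub.mono fun x hx => hx.2.trans_lt h1)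
    · exact fun x hx => ⟨by linarith [hx.1], by linarith [hx.2]⟩
    · exact fun x hx => ⟨by linarith [hx.2], by linarith [hx.1]⟩
  · rintro x ⟨hx0, hxt⟩
    have hx1 : 0 < 1 - x := by linarith
    have hxabs : |x| < 1 := by rw [abs_of_pos hx0]; linarith
    have hxabs' : |1 - x| < 1 := by rw [abs_of_pos hx1]; linarith
    have hsub : HasDerivAt (fun y : ℝ => 1 - y) (-1) x := (hasDerivAt_id x).const_sub 1
    refine (((hasDerivAt_Li_succ 1 hxabs hx0.ne').add (hsub.Li_succ 1 hxabs' hx1.ne')).add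
      ((Real.hasDerivAt_log hx0.ne').mul (hsub.log hx1.ne'))).congr_deriv ?_
    rw [Li_one hxabs, Li_one hxabs', sub_sub_cancel]
    field_simp
    ring

/-- The derivative of `t ↦ F (2 t - 1)`, multiplied by `t (1 - t) / 24`. -/
noncomputable def fluxF (t : ℝ) : ℝ :=
  (1 - t) * (-(Li 2 t * Real.log (1 - t)) + π ^ 2 / 6 * Real.log (1 - t) + 2 * Li 3 t
      + 2 * (Li 3 (1 - t) - zeta3))
    + t * (2 * Li 3 (1 - t) - 2 * (Real.log t * Li 2 (1 - t)) - Real.log (1 - t) ^ 3 / 3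
      - π ^ 2 / 3 * Real.log (1 - t))
    + 2 * Li 3 (t / (t - 1))
    + ((1 - t) * Real.log (1 - t) - t * Real.log t) * (Li 2 t - π ^ 2 / 2
      - (1 / 3) * Real.log (1 - t) ^ 2 + Real.log t * Real.log (1 - t))
    + t * (Real.log t * Real.log (1 - t) * (2 / 3 * Real.log (1 - t) - Real.log t))

theorem hasDerivAt_F {z : ℝ} (h1 : -1 < z) (h2 : z < 0) :
    HasDerivAt F (48 * fluxF ((1 + z) / 2) / (1 - z ^ 2)) z := by
  obtain ⟨t, rfl⟩ : ∃ t : ℝ, z = 2 * t - 1 := ⟨(1 + z) / 2, by ring⟩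
  have ht0 : 0 < t := by linarith
  have ht1 : t < 1 / 2 := by linarith
  have hs0 : 0 < 1 - t := by linarith
  have hu0 : t - 1 ≠ 0 := by linarith
  have htabs : |t| < 1 := by rw [abs_of_pos ht0]; linarith
  have hsabs : |1 - t| < 1 := by rw [abs_of_pos hs0]; linarith
  have hu := abs_div_sub_one_lt_one ht0.le ht1
  have hsub : HasDerivAt (fun y : ℝ => 1 - y) (-1) t := (hasDerivAt_id t).const_sub 1
  have hL := Real.hasDerivAt_log ht0.ne'
  have hM := hsub.log hs0.ne'
  have hA := hasDerivAt_Li_succ 1 htabs ht0.ne'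
  have hmain := ((((((((((hA.pow 2).const_mul (1 / 2)).sub (hA.const_mul (π ^ 2 / 6))).add
    ((hasDerivAt_Li_succ 3 htabs ht0.ne').const_mul 2)).sub
    ((hsub.Li_succ 3 hsabs hs0.ne').const_mul 2)).add
    ((hL.const_mul 2).mul ((hsub.Li_succ 2 hsabs hs0.ne').sub_const zeta3))).add
    ((hM.pow 4).const_mul (1 / 12))).add ((hM.pow 2).const_mul (π ^ 2 / 6))).add
    (((hasDerivAt_div_sub_one hu0).Li_succ 3 hu (div_ne_zero ht0.ne' hu0)).const_mul 2)).add
    ((hL.mul hM).mul (((hA.sub_const (π ^ 2 / 2)).sub ((hM.pow 2).const_mul (1 / 3))).add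
      (hL.mul hM)))).const_mul 24 |>.const_add (π ^ 4 / 15)
  have hz : (1 + (2 * t - 1)) / 2 = t := by ring
  have haff : HasDerivAt (fun z : ℝ => (1 + z) / 2) (1 / 2) (2 * t - 1) :=
    ((hasDerivAt_id _).const_add 1).div_const 2
  rw [← hz] at hmain
  refine (hmain.comp (2 * t - 1) haff).congr_deriv ?_
  rw [hz, Li_one htabs, fluxF]
  have hden : 1 - (2 * t - 1) ^ 2 = 4 * t * (1 - t) := by ring
  have hu' : t - 1 = -(1 - t) := by ring
  rw [hden]
  simp only [Pi.mul_apply, Pi.add_apply, Pi.sub_apply, Pi.pow_apply]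
  generalize Li 3 (t / (t - 1)) = U
  rw [hu']
  have hs := hs0.ne'
  field_simp
  ring

theorem hasDerivAt_fluxF {t : ℝ} (ht0 : 0 < t) (ht1 : t < 1 / 2) :
    HasDerivAt fluxF (-2 * Li 3 t + Real.log t * Li 2 t + π ^ 2 / 6 * Real.log t + 2 * zeta3
      + Li 2 (1 - t)) t := by
  have hs0 : 0 < 1 - t := by linarith
  have hu0 : t - 1 ≠ 0 := by linarith
  have htabs : |t| < 1 := by rw [abs_of_pos ht0]; linarith
  have hsabs : |1 - t| < 1 := by rw [abs_of_pos hs0]; linarith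
  have hu := abs_div_sub_one_lt_one ht0.le ht1
  have hid := hasDerivAt_id' t
  have hsub : HasDerivAt (fun y : ℝ => 1 - y) (-1) t := (hasDerivAt_id t).const_sub 1
  have hL := Real.hasDerivAt_log ht0.ne'
  have hM := hsub.log hs0.ne'
  have hA := hasDerivAt_Li_succ 1 htabs ht0.ne'
  have hB := hsub.Li_succ 1 hsabs hs0.ne'
  have hC := hsub.Li_succ 2 hsabs hs0.ne'
  have hmain := ((((hsub.mul ((((hA.mul hM).neg.add (hM.const_mul (π ^ 2 / 6))).add
      ((hasDerivAt_Li_succ 2 htabs ht0.ne').const_mul 2)).add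
      ((hC.sub_const zeta3).const_mul 2))).add
    (hid.mul ((((hC.const_mul 2).sub ((hL.mul hB).const_mul 2)).sub
      ((hM.pow 3).div_const 3)).sub (hM.const_mul (π ^ 2 / 3))))).add
    (((hasDerivAt_div_sub_one hu0).Li_succ 2 hu (div_ne_zero ht0.ne' hu0)).const_mul 2)).add
    (((hsub.mul hM).sub (hid.mul hL)).mul
      (((hA.sub_const (π ^ 2 / 2)).sub ((hM.pow 2).const_mul (1 / 3))).add (hL.mul hM)))).add
    (hid.mul ((hL.mul hM).mul ((hM.const_mul (2 / 3)).sub hL)))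
  refine hmain.congr_deriv ?_
  simp only [Pi.mul_apply, Pi.add_apply, Pi.sub_apply, Pi.pow_apply, Pi.neg_apply, Nat.reduceAdd]
  rw [Li_one htabs, Li_one hsabs, Li_two_landen ht0 ht1, Li_two_reflection ht0 (by linarith),
    sub_sub_cancel]
  have hu' : t - 1 = -(1 - t) := by ring
  rw [hu']
  have hs := hs0.ne'
  field_simp
  ring

theorem stmt_6 (z : ℝ) (h1 : -1 < z) (h2 : z < 0) :
    HasDerivAt (fun z : ℝ => (1 - z ^ 2) * deriv F z)
      (-4 * (12 * Li 3 ((1 + z) / 2) - 6 * Real.log ((1 + z) / 2) * Li 2 ((1 + z) / 2)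
          - π ^ 2 * Real.log ((1 + z) / 2) - 12 * zeta3)
        - 12 * (-2 * Li 2 ((1 - z) / 2))) z := by
  have hflux : (fun z : ℝ => (1 - z ^ 2) * deriv F z) =ᶠ[nhds z]
      fun z => 48 * fluxF ((1 + z) / 2) := by
    filter_upwards [Ioo_mem_nhds h1 h2] with y hy
    have hden : 1 - y ^ 2 ≠ 0 := by nlinarith [hy.1, hy.2]
    rw [(hasDerivAt_F hy.1 hy.2).deriv]
    field_simp
  have haff : HasDerivAt (fun z : ℝ => (1 + z) / 2) (1 / 2) z :=
    ((hasDerivAt_id z).const_add 1).div_const 2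
  have hmain := ((hasDerivAt_fluxF (t := (1 + z) / 2) (by linarith) (by linarith)).comp z
    haff).const_mul 48
  refine (hmain.congr_of_eventuallyEq hflux).congr_deriv ?_
  rw [show 1 - (1 + z) / 2 = (1 - z) / 2 by ring]
  ring
end

section
/- For every real z with -1 < z < 1, the function 𝓘₃(z) = 6·(1+z)·( 2·Li₃((1+z)/2) + π²/6 − 1 − 2·ζ(3) − (Li₂((1+z)/2) + π²/6 − 1)·ln((1+z)/2) ) + 6·(1−z)·( Li₂((1+z)/2) + ln((1−z)/2)·ln((1+z)/2) ) has derivative 𝓘₃′(z) = 12·Li₃((1+z)/2) − 6·ln((1+z)/2)·Li₂((1+z)/2) − π²·ln((1+z)/2) − 12·ζ(3). -/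
open Real

theorem stmt_8 (z : ℝ) (h1 : -1 < z) (h2 : z < 1) :
    HasDerivAt (fun z : ℝ =>
      6 * (1 + z) * (2 * Li 3 ((1 + z) / 2) + π ^ 2 / 6 - 1 - 2 * zeta3
          - (Li 2 ((1 + z) / 2) + π ^ 2 / 6 - 1) * Real.log ((1 + z) / 2))
        + 6 * (1 - z) * (Li 2 ((1 + z) / 2) + Real.log ((1 - z) / 2) * Real.log ((1 + z) / 2)))
      (12 * Li 3 ((1 + z) / 2) - 6 * Real.log ((1 + z) / 2) * Li 2 ((1 + z) / 2)
        - π ^ 2 * Real.log ((1 + z) / 2) - 12 * zeta3) z := by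
  have hp : 0 < (1 + z) / 2 := by linarith
  have hq : 0 < (1 - z) / 2 := by linarith
  have habs : |(1 + z) / 2| < 1 := by
    rw [abs_of_pos hp]
    linarith
  have hw : HasDerivAt (fun z : ℝ => (1 + z) / 2) (1 / 2) z :=
    ((hasDerivAt_id z).const_add 1).div_const 2
  have hv : HasDerivAt (fun z : ℝ => (1 - z) / 2) (-1 / 2) z :=
    ((hasDerivAt_id z).const_sub 1).div_const 2
  have hLi3 := (hasDerivAt_Li_succ 2 habs hp.ne').comp z hw
  have hLi2 := (hasDerivAt_Li_succ 1 habs hp.ne').comp z hw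
  rw [Li_one habs, show 1 - (1 + z) / 2 = (1 - z) / 2 by ring] at hLi2
  have hlogp := hw.log hp.ne'
  have hlogq := hv.log hq.ne'
  have hleft := (((hasDerivAt_id z).const_add 1).const_mul 6).mul
    (((((hLi3.const_mul 2).add_const (π ^ 2 / 6)).sub_const 1).sub_const (2 * zeta3)).sub
      (((hLi2.add_const (π ^ 2 / 6)).sub_const 1).mul hlogp))
  have hright := (((hasDerivAt_id z).const_sub 1).const_mul 6).mul (hLi2.add (hlogq.mul hlogp))
  refine (hleft.add hright).congr_deriv ?_
  have hp' : 1 + z ≠ 0 := by linarith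
  have hq' : 1 - z ≠ 0 := by linarith
  simp only [Function.comp_apply, id_eq, Pi.add_apply, Pi.mul_apply, Pi.sub_apply]
  generalize Real.log ((1 - z) / 2) = M
  generalize Real.log ((1 + z) / 2) = L
  generalize Li 3 ((1 + z) / 2) = A
  generalize Li 2 ((1 + z) / 2) = B
  field_simp
  ring
end

section
/- The improper integral ∫₀¹ ln(t)·Li₂(t)/(1−t) dt converges and equals −π⁴/120. -/
open Real

/-- `∫₀¹ tⁿ log t dt = -1/(n+1)²`. -/
lemma integral_pow_mul_log (n : ℕ) :
    ∫ t in (0 : ℝ)..1, t ^ n * Real.log t = -(1 / ((n : ℝ) + 1) ^ 2) := by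
  have hn : (n : ℝ) + 1 ≠ 0 := by positivity
  have hint : IntervalIntegrable (fun t : ℝ => t ^ n * Real.log t) MeasureTheory.volume 0 1 :=
    intervalIntegral.intervalIntegrable_log'.continuousOn_mul (by fun_prop)
  have hcont : Continuous (fun t : ℝ =>
      t ^ n * (t * Real.log t) / (n + 1) - t ^ (n + 1) / ((n : ℝ) + 1) ^ 2) := by
    have := Real.continuous_mul_log
    fun_prop
  rw [intervalIntegral.integral_eq_sub_of_hasDerivAt_of_le zero_le_one hcont.continuousOn
    (fun x hx => ?_) hint]
  · simp
  · have hx0 : x ≠ 0 := hx.1.ne'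
    have h := (((hasDerivAt_pow (n + 1) x).mul (Real.hasDerivAt_log hx0)).div_const
      ((n : ℝ) + 1)).sub ((hasDerivAt_pow (n + 1) x).div_const (((n : ℝ) + 1) ^ 2))
    convert h using 1
    · ext t
      change _ = t ^ (n + 1) * Real.log t / (n + 1) - t ^ (n + 1) / ((n : ℝ) + 1) ^ 2
      ring
    · push_cast [Nat.add_sub_cancel]
      field_simp
      ring

/-- Splitting a double sum of a symmetric product over `i < j`, `i = j` and `j < i`. -/
lemma two_mul_tsum_lt_add_tsum_sq {a : ℕ → ℝ} (ha : Summable fun p : ℕ × ℕ => a p.1 * a p.2) :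
    2 * ∑' p : ℕ × ℕ, a p.1 * a (p.1 + p.2 + 1) + ∑' k, a k ^ 2 =
      ∑' p : ℕ × ℕ, a p.1 * a p.2 := by
  have tsum_indicator {β : Type} (g : β → ℕ × ℕ) (hg : Function.Injective g) :
      ∑' p, (Set.range g).indicator (fun p : ℕ × ℕ => a p.1 * a p.2) p =
        ∑' c, a (g c).1 * a (g c).2 := by
    rw [← hg.tsum_eq Set.support_indicator_subset]
    simp
  let lower : ℕ × ℕ → ℕ × ℕ := fun p => (p.1, p.1 + p.2 + 1)
  let upper : ℕ × ℕ → ℕ × ℕ := fun p => (p.1 + p.2 + 1, p.1)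
  let diag : ℕ → ℕ × ℕ := fun k => (k, k)
  have hlower : Function.Injective lower := by
    rintro ⟨i, j⟩ ⟨k, l⟩ h
    simp only [lower, Prod.mk.injEq] at h ⊢
    omega
  have hupper : Function.Injective upper := by
    rintro ⟨i, j⟩ ⟨k, l⟩ h
    simp only [upper, Prod.mk.injEq] at h ⊢
    omega
  have hdiag : Function.Injective diag := fun i j h => (Prod.mk.inj h).1
  have hl (i j : ℕ) : (i, j) ∈ Set.range lower ↔ i < j := by
    simp only [lower, Set.mem_range, Prod.exists, Prod.mk.injEq]
    exact ⟨by omega, fun h => ⟨i, j - i - 1, by omega⟩⟩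
  have hu (i j : ℕ) : (i, j) ∈ Set.range upper ↔ j < i := by
    simp only [upper, Set.mem_range, Prod.exists, Prod.mk.injEq]
    exact ⟨by omega, fun h => ⟨j, i - j - 1, by omega⟩⟩
  have hd (i j : ℕ) : (i, j) ∈ Set.range diag ↔ i = j := by
    simp [diag]
  have hsplit (p : ℕ × ℕ) : a p.1 * a p.2 =
      (Set.range lower).indicator (fun p : ℕ × ℕ => a p.1 * a p.2) p +
      (Set.range upper).indicator (fun p : ℕ × ℕ => a p.1 * a p.2) p +
      (Set.range diag).indicator (fun p : ℕ × ℕ => a p.1 * a p.2) p := by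
    classical
    obtain ⟨i, j⟩ := p
    simp only [Set.indicator_apply, hl, hu, hd]
    rcases lt_trichotomy i j with h | h | h
    · simp [h, h.ne, h.not_gt]
    · simp [h]
    · simp [h, h.ne', h.not_gt]
  rw [tsum_congr hsplit,
    ((ha.indicator _).add (ha.indicator _)).tsum_add (ha.indicator _),
    (ha.indicator _).tsum_add (ha.indicator _),
    tsum_indicator _ hlower, tsum_indicator _ hupper, tsum_indicator _ hdiag]
  simp only [lower, upper, diag, two_mul, sq, mul_comm (a (_ + _ + 1))]

lemma hasSum_one_div_succ_sq :
    HasSum (fun k : ℕ => 1 / ((k : ℝ) + 1) ^ 2) (π ^ 2 / 6) := by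
  have h := (hasSum_nat_add_iff' 1).mpr hasSum_zeta_two
  simpa using h

lemma hasSum_one_div_succ_pow_four :
    HasSum (fun k : ℕ => 1 / ((k : ℝ) + 1) ^ 4) (π ^ 4 / 90) := by
  have h := (hasSum_nat_add_iff' 1).mpr hasSum_zeta_four
  simpa using h

lemma summable_one_div_succ_sq_mul :
    Summable fun p : ℕ × ℕ => 1 / ((p.1 : ℝ) + 1) ^ 2 * (1 / ((p.2 : ℝ) + 1) ^ 2) :=
  hasSum_one_div_succ_sq.summable.mul_of_nonneg hasSum_one_div_succ_sq.summable
    (fun _ => by positivity) (fun _ => by positivity)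

lemma summable_lt_of_summable_mul {a : ℕ → ℝ}
    (ha : Summable fun p : ℕ × ℕ => a p.1 * a p.2) :
    Summable fun p : ℕ × ℕ => a p.1 * a (p.1 + p.2 + 1) := by
  have hinj : Function.Injective fun p : ℕ × ℕ => (p.1, p.1 + p.2 + 1) := by
    rintro ⟨i, j⟩ ⟨k, l⟩ h
    simp only [Prod.mk.injEq] at h ⊢
    omega
  exact ha.comp_injective hinj

/-- The double zeta value `ζ(2,2) = π⁴/120`. -/
lemma hasSum_double_zeta_two_two :
    HasSum (fun p : ℕ × ℕ => 1 / ((p.1 : ℝ) + 1) ^ 2 * (1 / ((p.1 + p.2 + 1 : ℕ) + 1 : ℝ) ^ 2))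
      (π ^ 4 / 120) := by
  have hs := hasSum_one_div_succ_sq.summable
  have hsum : Summable fun p : ℕ × ℕ =>
      1 / ((p.1 : ℝ) + 1) ^ 2 * (1 / ((p.1 + p.2 + 1 : ℕ) + 1 : ℝ) ^ 2) :=
    summable_lt_of_summable_mul (a := fun k : ℕ => 1 / ((k : ℝ) + 1) ^ 2)
      summable_one_div_succ_sq_mul
  have h := two_mul_tsum_lt_add_tsum_sq (a := fun k : ℕ => 1 / ((k : ℝ) + 1) ^ 2)
    summable_one_div_succ_sq_mul
  have hsq := hs.tsum_mul_tsum hs summable_one_div_succ_sq_mul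
  rw [hasSum_one_div_succ_sq.tsum_eq] at hsq
  have h4 : ∑' k : ℕ, (1 / ((k : ℝ) + 1) ^ 2) ^ 2 = π ^ 4 / 90 := by
    rw [← hasSum_one_div_succ_pow_four.tsum_eq]
    exact tsum_congr fun k => by rw [div_pow, one_pow, ← pow_mul]
  rw [h4, ← hsq] at h
  rw [hsum.hasSum_iff]
  linarith

/-- Expansion of the integrand as a double power series. -/
lemma hasSum_log_mul_Li_two_div {t : ℝ} (ht : t ∈ Set.Ioo (0 : ℝ) 1) :
    HasSum (fun p : ℕ × ℕ => 1 / ((p.1 : ℝ) + 1) ^ 2 * (t ^ (p.1 + p.2 + 1) * Real.log t))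
      (Real.log t * Li 2 t / (1 - t)) := by
  have hgeom := hasSum_geometric_of_lt_one ht.1.le ht.2
  have hLi : Summable fun k : ℕ => t ^ (k + 1) / ((k : ℝ) + 1) ^ 2 := by
    refine Summable.of_nonneg_of_le (fun k => ?_) (fun k => ?_) hasSum_one_div_succ_sq.summable
    · have := ht.1
      positivity
    · have := pow_le_one₀ (n := k + 1) ht.1.le ht.2.le
      gcongr
  have hmul := hLi.mul_of_nonneg hgeom.summable
    (fun k => by have := ht.1; positivity) (fun k => by have := ht.1; positivity)
  have h := ((hLi.hasSum.mul hgeom hmul).mul_left (Real.log t))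
  have hval : Real.log t * Li 2 t / (1 - t) =
      Real.log t * ((∑' k : ℕ, t ^ (k + 1) / ((k : ℝ) + 1) ^ 2) * (1 - t)⁻¹) := by
    rw [Li]
    ring
  rw [hval]
  have hterm (p : ℕ × ℕ) : 1 / ((p.1 : ℝ) + 1) ^ 2 * (t ^ (p.1 + p.2 + 1) * Real.log t) =
      Real.log t * (t ^ (p.1 + 1) / ((p.1 : ℝ) + 1) ^ 2 * t ^ p.2) := by
    ring
  simpa only [hterm] using h

theorem stmt_12 :
    IntervalIntegrable (fun t : ℝ => Real.log t * Li 2 t / (1 - t)) MeasureTheory.volume 0 1 ∧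
    ∫ t in (0 : ℝ)..1, Real.log t * Li 2 t / (1 - t) = -π ^ 4 / 120 := by
  let F : ℕ × ℕ → ℝ → ℝ := fun p t =>
    1 / ((p.1 : ℝ) + 1) ^ 2 * (t ^ (p.1 + p.2 + 1) * Real.log t)
  have hF_int (p : ℕ × ℕ) :
      MeasureTheory.Integrable (F p) (MeasureTheory.volume.restrict (Set.Ioo (0 : ℝ) 1)) := by
    have h : IntervalIntegrable (F p) MeasureTheory.volume 0 1 :=
      (intervalIntegral.intervalIntegrable_log'.continuousOn_mul (by fun_prop)).const_mul _
    rwa [intervalIntegrable_iff_integrableOn_Ioo_of_le zero_le_one] at h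
  have hF_val (p : ℕ × ℕ) : ∫ t in Set.Ioo (0 : ℝ) 1, F p t =
      -(1 / ((p.1 : ℝ) + 1) ^ 2 * (1 / ((p.1 + p.2 + 1 : ℕ) + 1 : ℝ) ^ 2)) := by
    rw [← MeasureTheory.integral_Ioc_eq_integral_Ioo,
      ← intervalIntegral.integral_of_le zero_le_one, intervalIntegral.integral_const_mul,
      integral_pow_mul_log, mul_neg]
  have hF_norm (p : ℕ × ℕ) : ∫ t in Set.Ioo (0 : ℝ) 1, ‖F p t‖ =
      1 / ((p.1 : ℝ) + 1) ^ 2 * (1 / ((p.1 + p.2 + 1 : ℕ) + 1 : ℝ) ^ 2) := by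
    rw [← neg_neg (_ * _), ← hF_val, ← MeasureTheory.integral_neg]
    refine MeasureTheory.setIntegral_congr_fun measurableSet_Ioo fun t ht => ?_
    refine Real.norm_of_nonpos (mul_nonpos_of_nonneg_of_nonpos (by positivity)
      (mul_nonpos_of_nonneg_of_nonpos (pow_nonneg ht.1.le _) (Real.log_nonpos ht.1.le ht.2.le)))
  have hsum := MeasureTheory.hasSum_integral_of_summable_integral_norm hF_int
    (by simpa only [hF_norm] using hasSum_double_zeta_two_two.summable)
  simp only [hF_val] at hsum
  have hval : ∫ t in (0 : ℝ)..1, Real.log t * Li 2 t / (1 - t) = -π ^ 4 / 120 := by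
    rw [intervalIntegral.integral_of_le zero_le_one, MeasureTheory.integral_Ioc_eq_integral_Ioo,
      neg_div, ← hsum.unique hasSum_double_zeta_two_two.neg]
    exact MeasureTheory.setIntegral_congr_fun measurableSet_Ioo fun t ht =>
      (hasSum_log_mul_Li_two_div ht).tsum_eq.symm
  refine ⟨?_, hval⟩
  -- A nonzero Bochner integral forces integrability.
  by_contra h
  rw [intervalIntegral.integral_undef h] at hval
  have : 0 < π ^ 4 := by positivity
  linarith
end

section
/- The double series ∑_{k=1}^∞ (1/k²)·(∑_{j=k+1}^∞ 1/j²) converges and equals π⁴/120; equivalently, ∑_{k=1}^∞ Ψ′(k+1)/k² = π⁴/120, where Ψ′(k+1) = ∑_{j=1}^∞ 1/(k+j)² is the trigamma function at k+1. -/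
open Real

/-- For a nonnegative summable sequence, the sum of products over ordered pairs `k < j` is half the
difference between the square of the sum and the sum of the squares. -/
theorem hasSum_mul_tsum_tail {f : ℕ → ℝ} {s q : ℝ} (hf : ∀ n, 0 ≤ f n) (hs : HasSum f s)
    (hq : HasSum (fun n => f n ^ 2) q) :
    HasSum (fun k => f k * ∑' j, f (j + (k + 1))) ((s ^ 2 - q) / 2) := by
  have tail_succ (k : ℕ) : ∑' j, f (j + k) = f k + ∑' j, f (j + (k + 1)) := by
    rw [((summable_nat_add_iff k).2 hs.summable).tsum_eq_zero_add]
    simp only [zero_add, add_assoc, add_comm 1 k]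
  have partial_sum (n : ℕ) : ∑ k ∈ Finset.range n, f k * ∑' j, f (j + (k + 1)) =
      (s ^ 2 - (∑' j, f (j + n)) ^ 2 - ∑ k ∈ Finset.range n, f k ^ 2) / 2 := by
    induction n with
    | zero => simp [hs.tsum_eq]
    | succ n ih =>
      rw [Finset.sum_range_succ, Finset.sum_range_succ, ih, tail_succ n]
      ring
  rw [hasSum_iff_tendsto_nat_of_nonneg fun k => mul_nonneg (hf k) (tsum_nonneg fun j => hf _)]
  simp only [partial_sum]
  simpa using ((((tendsto_sum_nat_add f).pow 2).const_sub (s ^ 2)).sub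
    hq.tendsto_sum_nat).div_const 2

theorem stmt_14 :
    Summable (fun k : ℕ =>
      (1 / ((k : ℝ) + 1) ^ 2) * ∑' j : ℕ, 1 / (((k : ℝ) + 1) + 1 + j) ^ 2) ∧
    ∑' k : ℕ, (1 / ((k : ℝ) + 1) ^ 2) * ∑' j : ℕ, 1 / (((k : ℝ) + 1) + 1 + j) ^ 2
      = π ^ 4 / 120 := by
  have zeta_two : HasSum (fun n : ℕ => 1 / ((n : ℝ) + 1) ^ 2) (π ^ 2 / 6) := by
    simpa using (hasSum_nat_add_iff' 1).2 hasSum_zeta_two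
  have zeta_four : HasSum (fun n : ℕ => (1 / ((n : ℝ) + 1) ^ 2) ^ 2) (π ^ 4 / 90) := by
    have h := (hasSum_nat_add_iff' 1).2 hasSum_zeta_four
    simpa [← pow_mul] using h
  have key : HasSum (fun k : ℕ =>
      (1 / ((k : ℝ) + 1) ^ 2) * ∑' j : ℕ, 1 / (((k : ℝ) + 1) + 1 + j) ^ 2) (π ^ 4 / 120) := by
    convert hasSum_mul_tsum_tail (fun n => by positivity) zeta_two zeta_four using 1
    · ext k
      congr 2
      ext j
      push_cast
      ring
    · ring
  exact ⟨key.summable, key.tsum_eq⟩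
end
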